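/- Let Ψ : ℝ^n → ℝ, let x, s ∈ ℝ^n, and let Δ ≥ 0, α, θ, ε_f, ξ, α_max > 0 with α ≤ α_max and ε_f < θξ/(4α_max). Suppose real numbers Ψ⁰, Ψˢ satisfy Ψ⁰ − Ψˢ ≥ θ·α·Δ, |Ψ(x) − Ψ⁰| ≤ ε_f·α²·‖d‖², |Ψ(x + s) − Ψˢ| ≤ ε_f·α²·‖d‖², and ‖d‖² ≤ ξ⁻¹·Δ. Then Ψ(x) − Ψ(x + s) ≥ (θ/2)·α·Δ. -/

import Mathlib

/-!
Trading one factor `α` for `α_max` and the factor `‖d‖²` for `Δ` shows that each estimate is off by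
at most `θαΔ/4`. The two errors together therefore consume at most half of the decrease `θαΔ`
observed by the line search.
-/

theorem sub_sub_add_le_sub_of_abs_sub_le {G : Type*} [AddCommGroup G] [LinearOrder G]
    [IsOrderedAddMonoid G] {a a' b b' e₁ e₂ : G} (ha : |a - a'| ≤ e₁) (hb : |b - b'| ≤ e₂) :
    a' - b' - (e₁ + e₂) ≤ a - b :=
  calc
    a' - b' - (e₁ + e₂) = a' - e₁ - (b' + e₂) := by abel
    _ ≤ a - b := sub_le_sub (sub_le_of_abs_sub_le_left ha)
      (sub_le_iff_le_add'.1 (abs_sub_le_iff.1 hb).1)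

theorem mul_le_of_le_div_of_le {K : Type*} [Field K] [LinearOrder K] [IsStrictOrderedRing K]
    {ε α αmax c : K} (hc : 0 ≤ c) (hα : 0 < α) (hααmax : α ≤ αmax) (hε : ε ≤ c / αmax) :
    ε * α ≤ c :=
  (le_div_iff₀ hα).1 (hε.trans (div_le_div_of_nonneg_left hc hα hααmax))

theorem mul_sq_mul_le_of_mul_le {R : Type*} [CommSemiring R] [PartialOrder R] [IsOrderedRing R]
    {ε α κ ξ δ Δ : R} (hα : 0 ≤ α) (hκ : 0 ≤ κ) (hδ : 0 ≤ δ) (hε : ε * α ≤ κ * ξ)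
    (hξδ : ξ * δ ≤ Δ) : ε * α ^ 2 * δ ≤ κ * α * Δ :=
  calc
    ε * α ^ 2 * δ = ε * α * (α * δ) := by ring
    _ ≤ κ * ξ * (α * δ) := by gcongr
    _ = κ * α * (ξ * δ) := by ring
    _ ≤ κ * α * Δ := by gcongr

theorem stmt_7_general {X E : Type*} [SeminormedAddGroup E] {Ψ : X → ℝ} {x y : X} {d : E}
    {Δ α θ εf ξ αmax Ψ0 Ψs : ℝ} (hα : 0 < α) (hθ : 0 ≤ θ) (hξ : 0 < ξ) (hααmax : α ≤ αmax)
    (hεsmall : εf ≤ θ * ξ / (4 * αmax)) (hls : θ * α * Δ ≤ Ψ0 - Ψs)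
    (hacc0 : |Ψ x - Ψ0| ≤ εf * α ^ 2 * ‖d‖ ^ 2) (haccs : |Ψ y - Ψs| ≤ εf * α ^ 2 * ‖d‖ ^ 2)
    (hd : ‖d‖ ^ 2 ≤ ξ⁻¹ * Δ) :
    θ / 2 * α * Δ ≤ Ψ x - Ψ y := by
  have hεα : εf * α ≤ θ / 4 * ξ := by
    refine mul_le_of_le_div_of_le (by positivity) hα hααmax (hεsmall.trans_eq ?_)
    rw [← div_div, div_mul_eq_mul_div]
  have herr : εf * α ^ 2 * ‖d‖ ^ 2 ≤ θ / 4 * α * Δ :=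
    mul_sq_mul_le_of_mul_le hα.le (by positivity) (by positivity) hεα ((le_inv_mul_iff₀ hξ).1 hd)
  calc
    θ / 2 * α * Δ = θ * α * Δ - (θ / 4 * α * Δ + θ / 4 * α * Δ) := by ring
    _ ≤ Ψ0 - Ψs - (εf * α ^ 2 * ‖d‖ ^ 2 + εf * α ^ 2 * ‖d‖ ^ 2) := by gcongr
    _ ≤ Ψ x - Ψ y := sub_sub_add_le_sub_of_abs_sub_le hacc0 haccs

/-- Accurate estimates plus a successful stochastic line search imply true
merit decrease: if `Ψ⁰ − Ψˢ ≥ θαΔ`, the estimates are `ε_f α²‖d‖²`-accurate,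
`‖d‖² ≤ ξ⁻¹Δ`, `α ≤ α_max` and `ε_f < θξ/(4α_max)`, then
`Ψ(x) − Ψ(x+s) ≥ (θ/2)αΔ`. -/
theorem stmt_7 (n : ℕ) (Ψ : EuclideanSpace ℝ (Fin n) → ℝ)
    (x s d : EuclideanSpace ℝ (Fin n))
    (Δ α θ εf ξ αmax Ψ0 Ψs : ℝ)
    (hΔ : 0 ≤ Δ) (hα : 0 < α) (hθ : 0 < θ) (hεf : 0 < εf) (hξ : 0 < ξ)
    (hαmax : 0 < αmax) (hααmax : α ≤ αmax)
    (hεsmall : εf < θ * ξ / (4 * αmax))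
    (hls : Ψ0 - Ψs ≥ θ * α * Δ)
    (hacc0 : |Ψ x - Ψ0| ≤ εf * α ^ 2 * ‖d‖ ^ 2)
    (haccs : |Ψ (x + s) - Ψs| ≤ εf * α ^ 2 * ‖d‖ ^ 2)
    (hd : ‖d‖ ^ 2 ≤ ξ⁻¹ * Δ) :
    Ψ x - Ψ (x + s) ≥ (θ / 2) * α * Δ :=
  stmt_7_general hα hθ.le hξ hααmax hεsmall.le hls hacc0 haccs hd
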